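/- Relative entropy inequality (Proposition 3.1): Let (ρ,u) be a bounded admissible weak solution of the Riemann problem on (0,T)×Ω, and let r ∈ C¹([0,T]×Ω̄) with r > 0 and V ∈ C¹([0,T]×Ω̄;ℝ²) (write V = (V¹,V²)). Then for a.a. τ ∈ (0,T): ∫_Ω E(ρ,u | r,V)(τ,·) dx − ∫_Ω E(ρ₀,u₀ | r(0,·),V(0,·)) dx + ∫₀^τ∫_{𝕋¹} [E(ρ_R,u_R | r(t,a,x₂),V(t,a,x₂)) u¹_R − E(ρ_L,u_L | r(t,−a,x₂),V(t,−a,x₂)) u¹_L] dx₂ dt + ∫₀^τ∫_{𝕋¹} [(p(ρ_R) − p(r)(t,a,x₂))(u¹_R − V¹(t,a,x₂)) − (p(ρ_L) − p(r)(t,−a,x₂))(u¹_L − V¹(t,−a,x₂))] dx₂ dt ≤ ∫₀^τ∫_Ω [ρ(∂_tV + u·∇_xV)·(V − u) + (p(r) − p(ρ)) div_xV] dx dt + ∫₀^τ∫_Ω [(r − ρ) ∂_tH'(r) + (rV − ρu)·∇_xH'(r)] dx dt. -/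

import Mathlib

/-!
The Gibbs relation `r H'(r) - H(r) = p(r)` turns the relative entropy into
`(½ ρ|u|² + H(ρ)) - ρ u · V + ρ (½|V|² - H'(r)) + p(r)`,
a sum of quantities whose evolution is controlled. The energy inequality bounds the first term; the
momentum equation tested with `V` gives the second; the continuity equation tested with
`φ = ½|V|² - H'(r)` gives the third. The last one satisfies the identity obtained by integrating
`∂ₜ p(r) + div (p(r) V)` over the cylinder `(0,τ) × Ω`, where periodicity kills the lateral flux in
`x₂`. In the sum of these four relations the space-time integrands agree with the claimed right-hand
side after `∂ p(r) = r ∂ H'(r)`, a consequence of `H''(r) = p'(r) / r`, and the boundary fluxes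
combine pointwise into those of the relative entropy and of `(p(ρ) - p(r)) (u - V)`.

Two points need care. First, test functions are globally `C¹`, whereas `r` is positive only on the
closed cylinder; there it has a positive minimum `m`, and `H'` and `p` are replaced by functions that
are `C¹` on the line and agree with them on `[m,∞)` (`exists_C1_extension`). Second, splitting an
integral of a sum requires integrability of each term. All integrands are bounded and measurable;
for `H(ρ)` near vacuum this uses the convexity of `p` (`Hfun_bounded`).
-/

open MeasureTheory Set

noncomputable section

/-- The pressure potential `H(ρ) = ρ ∫_1^ρ p(z)/z² dz`. -/
def Hfun (p : ℝ → ℝ) (ρ : ℝ) : ℝ := ρ * ∫ z in (1:ℝ)..ρ, p z / z ^ 2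

/-- Partial derivative of a scalar field on `ℝ²` with respect to the first variable. -/
def pd1 (f : ℝ × ℝ → ℝ) (x : ℝ × ℝ) : ℝ := deriv (fun y => f (y, x.2)) x.1

/-- Partial derivative of a scalar field on `ℝ²` with respect to the second variable. -/
def pd2 (f : ℝ × ℝ → ℝ) (x : ℝ × ℝ) : ℝ := deriv (fun y => f (x.1, y)) x.2

/-- Time derivative of a time-dependent scalar field. -/
def pdt (f : ℝ → ℝ × ℝ → ℝ) (t : ℝ) (x : ℝ × ℝ) : ℝ := deriv (fun s => f s x) t

/-- Euclidean dot product on `ℝ²`. -/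
def dot (v w : ℝ × ℝ) : ℝ := v.1 * w.1 + v.2 * w.2

/-- The spatial domain `Ω = (−a,a) × 𝕋¹`, the torus being realized as the periodic
cell `(0,1)` in the `x₂` variable. -/
def Dom (a : ℝ) : Set (ℝ × ℝ) := Ioo (-a) a ×ˢ Ioo (0:ℝ) 1

/-- Riemann-type initial data: the value `L` for `x₁ ≤ 0` and `R` for `x₁ > 0`. -/
def riem (L R : ℝ) (x : ℝ × ℝ) : ℝ := if x.1 ≤ 0 then L else R

/-- Hypotheses on the pressure: `p ∈ C[0,∞) ∩ C¹(0,∞)`, `p(0) = 0`, `p' > 0` on `(0,∞)`,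
`p` convex on `[0,∞)`. -/
def PressureOK (p : ℝ → ℝ) : Prop :=
  ContinuousOn p (Ici 0) ∧ ContDiffOn ℝ 1 p (Ioi 0) ∧ p 0 = 0 ∧
    (∀ ρ : ℝ, 0 < ρ → 0 < deriv p ρ) ∧ ConvexOn ℝ (Ici 0) p

/-- A scalar test function: `C¹` on `[0,T] × Ω̄` (realized as a globally `C¹` function) and
`1`-periodic in the `x₂` variable. -/
def IsTest (φ : ℝ → ℝ × ℝ → ℝ) : Prop :=
  ContDiff ℝ 1 (Function.uncurry φ) ∧ ∀ t x₁ x₂, φ t (x₁, x₂ + 1) = φ t (x₁, x₂)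

/-- A vector test function: `C¹` on `[0,T] × Ω̄` (realized as a globally `C¹` function) and
`1`-periodic in the `x₂` variable. -/
def IsTestV (φ : ℝ → ℝ × ℝ → ℝ × ℝ) : Prop :=
  ContDiff ℝ 1 (Function.uncurry φ) ∧ ∀ t x₁ x₂, φ t (x₁, x₂ + 1) = φ t (x₁, x₂)

/-- A bounded admissible weak solution of the Riemann problem for the compressible Euler
system on `(0,T) × Ω`, with Riemann data `(ρ_L, u¹_L)`, `(ρ_R, u¹_R)`: the weak formulation
(w1) of the equation of continuity, (w2) of the momentum equation and the energy
inequality (w3), with the prescribed initial state and boundary fluxes. -/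
structure IsAdmissibleWeakSol (T a : ℝ) (p : ℝ → ℝ) (ρL ρR u1L u1R : ℝ)
    (ρ : ℝ → ℝ × ℝ → ℝ) (u : ℝ → ℝ × ℝ → ℝ × ℝ) : Prop where
  meas_ρ : Measurable (Function.uncurry ρ)
  meas_u : Measurable (Function.uncurry u)
  bdd : ∃ C : ℝ, ∀ t x, |ρ t x| ≤ C ∧ ‖u t x‖ ≤ C
  nonneg : ∀ᵐ z ∂(volume.restrict (Ioo 0 T ×ˢ Dom a) : Measure (ℝ × (ℝ × ℝ))),
    0 ≤ ρ z.1 z.2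
  w1 : ∀ᵐ τ ∂(volume.restrict (Ioo 0 T)), ∀ φ : ℝ → ℝ × ℝ → ℝ, IsTest φ →
    (∫ x in Dom a, (ρ τ x * φ τ x - riem ρL ρR x * φ 0 x)) +
      (∫ t in (0:ℝ)..τ, ∫ s in (0:ℝ)..1,
        (ρR * u1R * φ t (a, s) - ρL * u1L * φ t (-a, s)))
    = ∫ t in (0:ℝ)..τ, ∫ x in Dom a,
        (ρ t x * pdt φ t x
          + ρ t x * ((u t x).1 * pd1 (φ t) x + (u t x).2 * pd2 (φ t) x))
  w2 : ∀ᵐ τ ∂(volume.restrict (Ioo 0 T)), ∀ φ : ℝ → ℝ × ℝ → ℝ × ℝ, IsTestV φ →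
    (∫ x in Dom a, (ρ τ x * dot (u τ x) (φ τ x)
        - riem ρL ρR x * dot (riem u1L u1R x, 0) (φ 0 x))) +
      (∫ t in (0:ℝ)..τ, ∫ s in (0:ℝ)..1,
        (ρR * u1R * dot (u1R, 0) (φ t (a, s)) - ρL * u1L * dot (u1L, 0) (φ t (-a, s)))) +
      (∫ t in (0:ℝ)..τ, ∫ s in (0:ℝ)..1,
        (p ρR * (φ t (a, s)).1 - p ρL * (φ t (-a, s)).1))
    = ∫ t in (0:ℝ)..τ, ∫ x in Dom a,
        (ρ t x * dot (u t x) (deriv (fun τ' => φ τ' x) t)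
          + ρ t x * ((u t x).1 * (u t x).1 * pd1 (fun y => (φ t y).1) x
            + (u t x).2 * (u t x).1 * pd2 (fun y => (φ t y).1) x
            + (u t x).1 * (u t x).2 * pd1 (fun y => (φ t y).2) x
            + (u t x).2 * (u t x).2 * pd2 (fun y => (φ t y).2) x)
          + p (ρ t x) * (pd1 (fun y => (φ t y).1) x + pd2 (fun y => (φ t y).2) x))
  w3 : ∀ᵐ τ ∂(volume.restrict (Ioo 0 T)),
    (∫ x in Dom a, (1 / 2 * ρ τ x * dot (u τ x) (u τ x) + Hfun p (ρ τ x))) -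
      (∫ x in Dom a, (1 / 2 * riem ρL ρR x * (riem u1L u1R x) ^ 2
        + Hfun p (riem ρL ρR x))) +
      (∫ _t in (0:ℝ)..τ, ∫ _s in (0:ℝ)..1,
        ((1 / 2 * ρR * u1R ^ 2 + Hfun p ρR + p ρR) * u1R
          - (1 / 2 * ρL * u1L ^ 2 + Hfun p ρL + p ρL) * u1L)) ≤ 0

/-- The relative entropy `E(ρ,u | r,V) = ½ ρ|u−V|² + H(ρ) − H'(r)(ρ−r) − H(r)`. -/
def relEnt (p : ℝ → ℝ) (ρ : ℝ) (u : ℝ × ℝ) (r : ℝ) (V : ℝ × ℝ) : ℝ :=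
  1 / 2 * ρ * dot (u - V) (u - V) +
    (Hfun p ρ - deriv (Hfun p) r * (ρ - r) - Hfun p r)

/-! ### The pressure potential -/

lemma PressureOK.hasDerivAt {p : ℝ → ℝ} (hp : PressureOK p) {s : ℝ} (hs : 0 < s) :
    HasDerivAt p (deriv p s) s :=
  ((hp.2.1.differentiableOn one_ne_zero).differentiableAt (Ioi_mem_nhds hs)).hasDerivAt

lemma PressureOK.continuousOn_deriv {p : ℝ → ℝ} (hp : PressureOK p) :
    ContinuousOn (deriv p) (Ioi 0) :=
  hp.2.1.continuousOn_deriv_of_isOpen isOpen_Ioi le_rfl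

lemma PressureOK.continuousOn_div_sq {p : ℝ → ℝ} (hp : PressureOK p) :
    ContinuousOn (fun z => p z / z ^ 2) (Ioi 0) :=
  (hp.1.mono Ioi_subset_Ici_self).div (by fun_prop)
    fun _ hx => pow_ne_zero 2 (ne_of_gt hx)

lemma Hfun_hasDerivAt {p : ℝ → ℝ} (hp : PressureOK p) {s : ℝ} (hs : 0 < s) :
    HasDerivAt (Hfun p) ((∫ z in (1:ℝ)..s, p z / z ^ 2) + p s / s) s := by
  have hsub : uIcc 1 s ⊆ Ioi (0:ℝ) := fun x hx =>
    lt_of_lt_of_le (lt_min one_pos hs) hx.1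
  have h1 : HasDerivAt (fun t => ∫ z in (1:ℝ)..t, p z / z ^ 2) (p s / s ^ 2) s :=
    intervalIntegral.integral_hasDerivAt_right
      (hp.continuousOn_div_sq.mono hsub).intervalIntegrable
      (hp.continuousOn_div_sq.stronglyMeasurableAtFilter isOpen_Ioi s hs)
      (hp.continuousOn_div_sq.continuousAt (Ioi_mem_nhds hs))
  refine ((hasDerivAt_id s).mul h1).congr_deriv ?_
  simp only [id]
  field_simp

/-- The Gibbs relation `ρ H'(ρ) - H(ρ) = p(ρ)`. -/
lemma deriv_Hfun_mul_sub {p : ℝ → ℝ} (hp : PressureOK p) {s : ℝ} (hs : 0 < s) :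
    deriv (Hfun p) s * s - Hfun p s = p s := by
  rw [(Hfun_hasDerivAt hp hs).deriv, Hfun]
  field_simp
  ring

/-- `H''(ρ) = p'(ρ) / ρ`, the source of the identity `∂ p(r) = r ∂ H'(r)`. -/
lemma deriv_Hfun_hasDerivAt {p : ℝ → ℝ} (hp : PressureOK p) {s : ℝ} (hs : 0 < s) :
    HasDerivAt (deriv (Hfun p)) (deriv p s / s) s := by
  have hsub : uIcc 1 s ⊆ Ioi (0:ℝ) := fun x hx =>
    lt_of_lt_of_le (lt_min one_pos hs) hx.1
  have h1 : HasDerivAt (fun t => ∫ z in (1:ℝ)..t, p z / z ^ 2) (p s / s ^ 2) s :=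
    intervalIntegral.integral_hasDerivAt_right
      (hp.continuousOn_div_sq.mono hsub).intervalIntegrable
      (hp.continuousOn_div_sq.stronglyMeasurableAtFilter isOpen_Ioi s hs)
      (hp.continuousOn_div_sq.continuousAt (Ioi_mem_nhds hs))
  have h2 := h1.add ((hp.hasDerivAt hs).div (hasDerivAt_id s) hs.ne')
  have h3 : deriv (Hfun p) =ᶠ[nhds s]
      ((fun t => ∫ z in (1:ℝ)..t, p z / z ^ 2) + p / id) := by
    filter_upwards [Ioi_mem_nhds hs] with t ht
    rw [(Hfun_hasDerivAt hp ht).deriv]; rfl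
  refine (h2.congr_of_eventuallyEq h3).congr_deriv ?_
  simp only [id]
  field_simp
  ring

/-- `H` stays bounded up to the vacuum `ρ = 0`: convexity and `p 0 = 0` give `p z ≤ p 1 * z` on
`[0,1]`, hence `|H| ≤ p 1` there. -/
lemma Hfun_bounded {p : ℝ → ℝ} (hp : PressureOK p) (C : ℝ) :
    ∃ M, ∀ s, 0 ≤ s → s ≤ C → |Hfun p s| ≤ M := by
  have hmono : StrictMonoOn p (Ici 0) :=
    strictMonoOn_of_deriv_pos (convex_Ici 0) hp.1 (by simpa using hp.2.2.2.1)
  have hp0 := hp.2.2.1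
  have hcont : ContinuousOn (Hfun p) (Icc 1 C) := fun x hx =>
    (Hfun_hasDerivAt hp (lt_of_lt_of_le one_pos hx.1)).continuousAt.continuousWithinAt
  obtain ⟨M, hM⟩ := isCompact_Icc.exists_bound_of_continuousOn hcont
  refine ⟨max M (p 1), fun s hs hsC => ?_⟩
  rcases le_or_gt 1 s with h1 | h1
  · exact (hM s ⟨h1, hsC⟩).trans (le_max_left _ _)
  refine le_trans ?_ (le_max_right _ _)
  have hp1 : 0 ≤ p 1 := by
    have := hmono (a := 0) (b := 1) (by simp) (by simp) one_pos
    linarith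
  rcases hs.eq_or_lt with rfl | hs
  · simpa [Hfun] using hp1
  have hbd : ∀ z ∈ uIoc 1 s, ‖p z / z ^ 2‖ ≤ p 1 / s := by
    intro z hz
    rw [uIoc_of_ge h1.le] at hz
    have hz0 : 0 < z := hs.trans hz.1
    have hpz : 0 ≤ p z := by
      have := hmono (a := 0) (b := z) (by simp) hz0.le hz0
      linarith
    have hconv : p z ≤ z * p 1 := by
      have := hp.2.2.2.2.2 (mem_Ici.2 le_rfl) (mem_Ici.2 zero_le_one)
        (by linarith [hz.2] : 0 ≤ 1 - z) hz0.le (by ring)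
      simpa [hp0] using this
    rw [Real.norm_of_nonneg (by positivity), div_le_div_iff₀ (by positivity) hs]
    calc p z * s ≤ (z * p 1) * z :=
          mul_le_mul hconv hz.1.le hs.le (by positivity)
      _ = p 1 * z ^ 2 := by ring
  have h := intervalIntegral.norm_integral_le_of_norm_le_const hbd
  rw [Hfun, abs_mul, abs_of_pos hs]
  rw [Real.norm_eq_abs, abs_sub_comm, abs_of_pos (by linarith : (0:ℝ) < 1 - s)] at h
  calc s * |∫ z in (1:ℝ)..s, p z / z ^ 2| ≤ s * (p 1 / s * (1 - s)) := by gcongr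
    _ = p 1 * (1 - s) := by field_simp
    _ ≤ p 1 := by nlinarith

/-- A function that is `C¹` on `(0,∞)` agrees on `[m,∞)`, `m > 0`, to first order with a function
that is `C¹` on the whole line (continued affinely to the left of `m`). -/
lemma exists_C1_extension {f f' : ℝ → ℝ} (hf : ∀ s, 0 < s → HasDerivAt f (f' s) s)
    (hf' : ContinuousOn f' (Ioi 0)) {m : ℝ} (hm : 0 < m) :
    ∃ F : ℝ → ℝ, ContDiff ℝ 1 F ∧ ∀ s, m ≤ s → F s = f s ∧ HasDerivAt F (f' s) s := by
  have hc : Continuous fun z => f' (max z m) :=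
    hf'.comp_continuous (by fun_prop) fun z => lt_of_lt_of_le hm (le_max_right _ _)
  have hd : ∀ s, HasDerivAt (fun s => f m + ∫ z in m..s, f' (max z m)) (f' (max s m)) s :=
    fun s => (intervalIntegral.integral_hasDerivAt_right (hc.intervalIntegrable _ _)
      (hc.stronglyMeasurableAtFilter _ _) hc.continuousAt).const_add _
  refine ⟨fun s => f m + ∫ z in m..s, f' (max z m), ?_, fun s hs => ⟨?_, ?_⟩⟩
  · rw [contDiff_one_iff_deriv]
    refine ⟨fun s => (hd s).differentiableAt, ?_⟩
    rw [funext fun s => (hd s).deriv]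
    exact hc
  · have : ∫ z in m..s, f' (max z m) = f s - f m := by
      have hsub : uIcc m s ⊆ Ioi 0 := by
        rw [uIcc_of_le hs]; exact fun x hx => lt_of_lt_of_le hm hx.1
      rw [← intervalIntegral.integral_eq_sub_of_hasDerivAt (f' := f')
        (fun x hx => hf x (hsub hx)) (hf'.mono hsub).intervalIntegrable]
      refine intervalIntegral.integral_congr fun z hz => ?_
      rw [uIcc_of_le hs] at hz
      simp only [max_eq_left hz.1]
    simp only [this]; ring
  · simpa only [max_eq_left hs] using hd s

/-! ### Calculus of test functions -/

lemma IsTest.hasDerivAt_t {f : ℝ → ℝ × ℝ → ℝ} (hf : IsTest f) (t : ℝ) (x : ℝ × ℝ) :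
    HasDerivAt (fun s => f s x) (pdt f t x) t := by
  have h : Differentiable ℝ (fun s => Function.uncurry f (s, x)) :=
    (hf.1.differentiable one_ne_zero).comp (by fun_prop)
  exact (h t).hasDerivAt

lemma IsTest.hasDerivAt_1 {f : ℝ → ℝ × ℝ → ℝ} (hf : IsTest f) (t : ℝ) (x : ℝ × ℝ) :
    HasDerivAt (fun y => f t (y, x.2)) (pd1 (f t) x) x.1 := by
  have h : Differentiable ℝ (fun y => Function.uncurry f (t, (y, x.2))) :=
    (hf.1.differentiable one_ne_zero).comp (by fun_prop)
  exact (h x.1).hasDerivAt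

lemma IsTest.hasDerivAt_2 {f : ℝ → ℝ × ℝ → ℝ} (hf : IsTest f) (t : ℝ) (x : ℝ × ℝ) :
    HasDerivAt (fun y => f t (x.1, y)) (pd2 (f t) x) x.2 := by
  have h : Differentiable ℝ (fun y => Function.uncurry f (t, (x.1, y))) :=
    (hf.1.differentiable one_ne_zero).comp (by fun_prop)
  exact (h x.2).hasDerivAt

lemma IsTest.continuous {f : ℝ → ℝ × ℝ → ℝ} (hf : IsTest f) :
    Continuous fun z : ℝ × (ℝ × ℝ) => f z.1 z.2 := hf.1.continuous

lemma IsTest.continuous_dir {f : ℝ → ℝ × ℝ → ℝ} (hf : IsTest f) (v : ℝ × (ℝ × ℝ)) :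
    Continuous fun z => fderiv ℝ (Function.uncurry f) z v :=
  (hf.1.continuous_fderiv one_ne_zero).clm_apply continuous_const

lemma IsTest.continuous_pdt {f : ℝ → ℝ × ℝ → ℝ} (hf : IsTest f) :
    Continuous fun z : ℝ × (ℝ × ℝ) => pdt f z.1 z.2 := by
  convert hf.continuous_dir (1, (0, 0)) using 2 with z
  have h := ((hf.1.differentiable one_ne_zero) z).hasFDerivAt.comp_hasDerivAt z.1
    ((hasDerivAt_id z.1).prodMk (hasDerivAt_const z.1 z.2))
  exact h.deriv

lemma IsTest.continuous_pd1 {f : ℝ → ℝ × ℝ → ℝ} (hf : IsTest f) :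
    Continuous fun z : ℝ × (ℝ × ℝ) => pd1 (f z.1) z.2 := by
  convert hf.continuous_dir (0, (1, 0)) using 2 with z
  have h := ((hf.1.differentiable one_ne_zero) z).hasFDerivAt.comp_hasDerivAt z.2.1
    ((hasDerivAt_const z.2.1 z.1).prodMk
      ((hasDerivAt_id z.2.1).prodMk (hasDerivAt_const z.2.1 z.2.2)))
  exact h.deriv

lemma IsTest.continuous_pd2 {f : ℝ → ℝ × ℝ → ℝ} (hf : IsTest f) :
    Continuous fun z : ℝ × (ℝ × ℝ) => pd2 (f z.1) z.2 := by
  convert hf.continuous_dir (0, (0, 1)) using 2 with z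
  have h := ((hf.1.differentiable one_ne_zero) z).hasFDerivAt.comp_hasDerivAt z.2.2
    ((hasDerivAt_const z.2.2 z.1).prodMk
      ((hasDerivAt_const z.2.2 z.2.1).prodMk (hasDerivAt_id z.2.2)))
  exact h.deriv

lemma IsTest.comp {f : ℝ → ℝ × ℝ → ℝ} (hf : IsTest f) {G : ℝ → ℝ} (hG : ContDiff ℝ 1 G) :
    IsTest fun t x => G (f t x) :=
  ⟨hG.comp hf.1, fun t x₁ x₂ => by simp only [hf.2 t x₁ x₂]⟩

lemma IsTest.mul {f g : ℝ → ℝ × ℝ → ℝ} (hf : IsTest f) (hg : IsTest g) :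
    IsTest fun t x => f t x * g t x :=
  ⟨hf.1.mul hg.1, fun t x₁ x₂ => by simp only [hf.2 t x₁ x₂, hg.2 t x₁ x₂]⟩

lemma IsTest.kinetic {v w q : ℝ → ℝ × ℝ → ℝ} (hv : IsTest v) (hw : IsTest w) (hq : IsTest q) :
    IsTest fun t x => 1 / 2 * (v t x * v t x + w t x * w t x) - q t x :=
  ⟨(contDiff_const.mul ((hv.1.mul hv.1).add (hw.1.mul hw.1))).sub hq.1,
    fun t x₁ x₂ => by simp only [hv.2 t x₁ x₂, hw.2 t x₁ x₂, hq.2 t x₁ x₂]⟩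

lemma HasDerivAt.kinetic {v w q : ℝ → ℝ} {v' w' q' s : ℝ} (hv : HasDerivAt v v' s)
    (hw : HasDerivAt w w' s) (hq : HasDerivAt q q' s) :
    HasDerivAt (fun t => 1 / 2 * (v t * v t + w t * w t) - q t) (v s * v' + w s * w' - q') s :=
  ((((hv.mul hv).add (hw.mul hw)).const_mul (1 / 2)).sub hq).congr_deriv (by ring)

lemma IsTestV.fst {φ : ℝ → ℝ × ℝ → ℝ × ℝ} (h : IsTestV φ) : IsTest fun t x => (φ t x).1 :=
  ⟨contDiff_fst.comp h.1, fun t x₁ x₂ => by simp only [h.2 t x₁ x₂]⟩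

lemma IsTestV.snd {φ : ℝ → ℝ × ℝ → ℝ × ℝ} (h : IsTestV φ) : IsTest fun t x => (φ t x).2 :=
  ⟨contDiff_snd.comp h.1, fun t x₁ x₂ => by simp only [h.2 t x₁ x₂]⟩

lemma IsTestV.deriv_eq {φ : ℝ → ℝ × ℝ → ℝ × ℝ} (h : IsTestV φ) (t : ℝ) (x : ℝ × ℝ) :
    deriv (fun s => φ s x) t = (pdt (fun s y => (φ s y).1) t x, pdt (fun s y => (φ s y).2) t x) :=
  ((h.fst.hasDerivAt_t t x).prodMk (h.snd.hasDerivAt_t t x)).deriv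

/-! ### Bounded measurable functions -/

/-- Essentially bounded measurable functions: a class of integrands closed under the algebraic
operations, and integrable for finite measures. -/
def BM {α : Type*} [MeasurableSpace α] (μ : Measure α) (f : α → ℝ) : Prop := MemLp f ⊤ μ

section BM
variable {α : Type*} [MeasurableSpace α] {μ : Measure α} {f g : α → ℝ}

lemma BM.add (hf : BM μ f) (hg : BM μ g) : BM μ fun x => f x + g x := MemLp.add hf hg
lemma BM.sub (hf : BM μ f) (hg : BM μ g) : BM μ fun x => f x - g x := MemLp.sub hf hg
lemma BM.mul (hf : BM μ f) (hg : BM μ g) : BM μ fun x => f x * g x := MemLp.mul' hg hf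
lemma BM.const (c : ℝ) : BM μ fun _ => c :=
  memLp_top_of_bound aestronglyMeasurable_const ‖c‖ (by simp)
lemma BM.integrable [IsFiniteMeasure μ] (hf : BM μ f) : Integrable f μ :=
  MemLp.integrable le_top hf
lemma BM.congr (hf : BM μ f) (h : f =ᵐ[μ] g) : BM μ g := (memLp_congr_ae h).1 hf
end BM

lemma BM.of_continuous {α : Type*} [MeasurableSpace α] [TopologicalSpace α] [BorelSpace α]
    [SecondCountableTopology α] {μ : Measure α} {s K : Set α} {f : α → ℝ}
    (hf : Continuous f) (hs : MeasurableSet s) (hK : IsCompact K) (hsK : s ⊆ K) :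
    BM (μ.restrict s) f := by
  obtain ⟨C, hC⟩ := hK.exists_bound_of_continuousOn hf.continuousOn
  exact memLp_top_of_bound hf.aestronglyMeasurable C
    ((ae_restrict_iff' hs).2 (.of_forall fun x hx => hC x (hsK hx)))

/-- Compositions `F ∘ ρ` with a bounded density `0 ≤ ρ ≤ C`, for `F` continuous on `(0,∞)` and
bounded on `[0,C]`. -/
lemma BM.comp_density {α : Type*} [MeasurableSpace α] {μ : Measure α} {ρ : α → ℝ}
    (hρ : Measurable ρ) {C : ℝ} (hC : ∀ x, |ρ x| ≤ C) (h0 : ∀ᵐ x ∂μ, 0 ≤ ρ x) {F : ℝ → ℝ}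
    (hF : ContinuousOn F (Ioi 0)) (hb : ∃ M, ∀ s, 0 ≤ s → s ≤ C → |F s| ≤ M) :
    BM μ fun x => F (ρ x) := by
  classical
  obtain ⟨M, hM⟩ := hb
  have hm : Measurable ((Ioi (0:ℝ)).piecewise F fun _ => F 0) :=
    hF.measurable_piecewise continuousOn_const measurableSet_Ioi
  refine memLp_top_of_bound (AEStronglyMeasurable.congr (hm.comp hρ).aestronglyMeasurable ?_) M ?_
  · filter_upwards [h0] with x hx
    rcases hx.eq_or_lt with h | h
    · simp [Function.comp, Set.piecewise, ← h]
    · simp [Function.comp, Set.piecewise, h]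
  · filter_upwards [h0] with x hx
    exact hM _ hx ((le_abs_self _).trans (hC x))

/-! ### Space-time integrals -/

/-- The iterated integral `∫₀^τ ∫_D f(t,x) dx dt`. -/
def Jint {β : Type*} [MeasureSpace β] (τ : ℝ) (D : Set β) (f : ℝ → β → ℝ) : ℝ :=
  ∫ t in (0:ℝ)..τ, ∫ x in D, f t x

section Jint
variable {β : Type*} [MeasureSpace β] [SFinite (volume : Measure β)] {τ : ℝ} {D : Set β}

lemma finite_cyl (hD : volume D ≠ ⊤) :
    IsFiniteMeasure ((volume : Measure (ℝ × β)).restrict (Ioc 0 τ ×ˢ D)) := by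
  refine ⟨?_⟩
  rw [Measure.restrict_apply_univ, Measure.volume_eq_prod, Measure.prod_prod, Real.volume_Ioc]
  exact ENNReal.mul_lt_top ENNReal.ofReal_lt_top hD.lt_top

lemma Jint_eq (hτ : 0 ≤ τ) (hD : volume D ≠ ⊤) {f : ℝ → β → ℝ}
    (hf : BM (volume.restrict (Ioc 0 τ ×ˢ D)) fun z => f z.1 z.2) :
    Jint τ D f = ∫ z in Ioc 0 τ ×ˢ D, f z.1 z.2 := by
  have := finite_cyl (τ := τ) hD
  have h := hf.integrable
  rw [Jint, intervalIntegral.integral_of_le hτ, Measure.volume_eq_prod, setIntegral_prod]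
  rwa [Measure.volume_eq_prod] at h

/-- Linear recombination of space-time integrals. The integrand `T₁` is only assumed to coincide
on the cylinder with a bounded measurable `T₁'`. -/
lemma Jint_comb (hτ : 0 ≤ τ) (hDm : MeasurableSet D) (hD : volume D ≠ ⊤)
    {T₁ T₂ T₁' A B C E F : ℝ → β → ℝ} (k : ℝ)
    (hT : BM (volume.restrict (Ioc 0 τ ×ˢ D)) fun z => T₁' z.1 z.2)
    (hA : BM (volume.restrict (Ioc 0 τ ×ˢ D)) fun z => A z.1 z.2)
    (hB : BM (volume.restrict (Ioc 0 τ ×ˢ D)) fun z => B z.1 z.2)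
    (hC : BM (volume.restrict (Ioc 0 τ ×ˢ D)) fun z => C z.1 z.2)
    (hE : BM (volume.restrict (Ioc 0 τ ×ˢ D)) fun z => E z.1 z.2)
    (hF : BM (volume.restrict (Ioc 0 τ ×ˢ D)) fun z => F z.1 z.2)
    (h₁ : ∀ t ∈ Ioc 0 τ, ∀ x ∈ D, T₁ t x = T₁' t x)
    (h₂ : ∀ t ∈ Ioc 0 τ, ∀ x ∈ D,
      T₂ t x = A t x - B t x + C t x + E t x + k * F t x - T₁ t x) :
    Jint τ D T₁ + Jint τ D T₂
      = Jint τ D A - Jint τ D B + Jint τ D C + Jint τ D E + k * Jint τ D F := by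
  have := finite_cyl (τ := τ) hD
  have hm : MeasurableSet (Ioc 0 τ ×ˢ D) := measurableSet_Ioc.prod hDm
  have e₁ : (fun z : ℝ × β => T₁' z.1 z.2) =ᵐ[volume.restrict (Ioc 0 τ ×ˢ D)]
      fun z => T₁ z.1 z.2 :=
    (ae_restrict_iff' hm).2 (.of_forall fun z hz => (h₁ z.1 hz.1 z.2 hz.2).symm)
  have hT₁ := hT.congr e₁
  have hkF := (BM.const (μ := volume.restrict (Ioc 0 τ ×ˢ D)) k).mul hF
  have hsum := ((((hA.sub hB).add hC).add hE).add hkF)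
  have e₂ : (fun z : ℝ × β => A z.1 z.2 - B z.1 z.2 + C z.1 z.2 + E z.1 z.2 + k * F z.1 z.2
      - T₁ z.1 z.2) =ᵐ[volume.restrict (Ioc 0 τ ×ˢ D)] fun z => T₂ z.1 z.2 :=
    (ae_restrict_iff' hm).2 (.of_forall fun z hz => (h₂ z.1 hz.1 z.2 hz.2).symm)
  have hT₂ := (hsum.sub hT₁).congr e₂
  rw [Jint_eq hτ hD hT₁, Jint_eq hτ hD hT₂, Jint_eq hτ hD hA, Jint_eq hτ hD hB, Jint_eq hτ hD hC,
    Jint_eq hτ hD hE, Jint_eq hτ hD hF, ← integral_congr_ae e₂,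
    integral_sub hsum.integrable hT₁.integrable,
    integral_add (((hA.sub hB).add hC).add hE).integrable hkF.integrable,
    integral_add ((hA.sub hB).add hC).integrable hE.integrable,
    integral_add (hA.sub hB).integrable hC.integrable,
    integral_sub hA.integrable hB.integrable, integral_const_mul]
  ring
end Jint

lemma setIntegral_comb {α : Type*} [MeasurableSpace α] {μ : Measure α} {D : Set α}
    (hDm : MeasurableSet D) [IsFiniteMeasure (μ.restrict D)] {f A B C E : α → ℝ}
    (hA : BM (μ.restrict D) A) (hB : BM (μ.restrict D) B)
    (hC : BM (μ.restrict D) C) (hE : BM (μ.restrict D) E)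
    (h : ∀ x ∈ D, f x = A x - B x + C x + E x) :
    ∫ x in D, f x ∂μ
      = (∫ x in D, A x ∂μ) - (∫ x in D, B x ∂μ) + (∫ x in D, C x ∂μ) + ∫ x in D, E x ∂μ := by
  rw [setIntegral_congr_fun hDm h,
    integral_add ((hA.sub hB).add hC).integrable hE.integrable,
    integral_add (hA.sub hB).integrable hC.integrable,
    integral_sub hA.integrable hB.integrable]

lemma measurableSet_Dom (a : ℝ) : MeasurableSet (Dom a) := measurableSet_Ioo.prod measurableSet_Ioo

lemma Dom_subset (a : ℝ) : Dom a ⊆ Icc (-a) a ×ˢ Icc (0:ℝ) 1 :=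
  prod_mono Ioo_subset_Icc_self Ioo_subset_Icc_self

lemma volume_Dom_ne_top (a : ℝ) : volume (Dom a) ≠ ⊤ :=
  ((measure_mono (Dom_subset a)).trans_lt
    (isCompact_Icc.prod isCompact_Icc).measure_lt_top).ne

lemma BM.of_continuous_Dom {a : ℝ} {f : ℝ × ℝ → ℝ} (hf : Continuous f) :
    BM (volume.restrict (Dom a)) f :=
  .of_continuous hf (measurableSet_Dom a) (isCompact_Icc.prod isCompact_Icc) (Dom_subset a)

lemma BM.of_continuous_cyl {τ a : ℝ} {f : ℝ × (ℝ × ℝ) → ℝ} (hf : Continuous f) :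
    BM (volume.restrict (Ioc 0 τ ×ˢ Dom a)) f :=
  .of_continuous hf (measurableSet_Ioc.prod (measurableSet_Dom a))
    ((isCompact_Icc (a := (0:ℝ)) (b := τ)).prod (isCompact_Icc.prod isCompact_Icc))
    (prod_mono Ioc_subset_Icc_self (Dom_subset a))

lemma BM.of_continuous_bdry {τ : ℝ} {f : ℝ × ℝ → ℝ} (hf : Continuous f) :
    BM (volume.restrict (Ioc 0 τ ×ˢ Ioc (0:ℝ) 1)) f :=
  .of_continuous hf (measurableSet_Ioc.prod measurableSet_Ioc)
    ((isCompact_Icc (a := (0:ℝ)) (b := τ)).prod (isCompact_Icc (a := (0:ℝ)) (b := 1)))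
    (prod_mono Ioc_subset_Icc_self Ioc_subset_Icc_self)

lemma BM.riem {α : Type*} [MeasurableSpace α] (g : α → ℝ × ℝ) (hg : Measurable g)
    {μ : Measure α} (L R : ℝ) : BM μ fun x => riem L R (g x) := by
  refine memLp_top_of_bound (Measurable.aestronglyMeasurable ?_) (max ‖L‖ ‖R‖)
    (.of_forall fun x => ?_)
  · exact Measurable.ite (measurableSet_le (measurable_fst.comp hg) measurable_const)
      measurable_const measurable_const
  · unfold _root_.riem
    split_ifs <;> simp

/-! ### The divergence theorem on the space-time cylinder -/

lemma IsTest.Jint_pdt {f : ℝ → ℝ × ℝ → ℝ} (hf : IsTest f) {τ : ℝ} (hτ : 0 ≤ τ) (a : ℝ) :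
    Jint τ (Dom a) (fun t x => pdt f t x) = (∫ x in Dom a, f τ x) - ∫ x in Dom a, f 0 x := by
  have hfin : IsFiniteMeasure (volume.restrict (Dom a)) :=
    ⟨by simpa using (volume_Dom_ne_top a).lt_top⟩
  have := finite_cyl (τ := τ) (volume_Dom_ne_top a)
  have hI := (BM.of_continuous_cyl (τ := τ) (a := a) hf.continuous_pdt).integrable
  rw [Measure.volume_eq_prod, ← Measure.prod_restrict] at hI
  have hc : ∀ t, Continuous (f t) := fun t => hf.continuous.comp (by fun_prop : Continuous (t, ·))
  rw [Jint, intervalIntegral.integral_of_le hτ, integral_integral_swap hI,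
    ← integral_sub (BM.of_continuous_Dom (hc τ)).integrable
      (BM.of_continuous_Dom (hc 0)).integrable]
  congr 1 with x
  rw [← intervalIntegral.integral_of_le hτ]
  exact intervalIntegral.integral_eq_sub_of_hasDerivAt (fun t _ => hf.hasDerivAt_t t x)
    ((hf.continuous_pdt.comp (by fun_prop : Continuous (·, x))).intervalIntegrable _ _)

lemma IsTest.Jint_pd1 {f : ℝ → ℝ × ℝ → ℝ} (hf : IsTest f) {a : ℝ} (ha : 0 < a) (τ : ℝ) :
    Jint τ (Dom a) (fun t x => pd1 (f t) x)
      = Jint τ (Ioc (0:ℝ) 1) (fun t s => f t (a, s) - f t (-a, s)) := by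
  have hfin : IsFiniteMeasure (volume.restrict (Dom a)) :=
    ⟨by simpa using (volume_Dom_ne_top a).lt_top⟩
  unfold Jint
  congr 1 with t
  have hc : Continuous (pd1 (f t)) :=
    hf.continuous_pd1.comp (by fun_prop : Continuous fun x : ℝ × ℝ => (t, x))
  have hI := (BM.of_continuous_Dom (a := a) hc).integrable
  rw [Dom, Measure.volume_eq_prod, ← Measure.prod_restrict] at hI ⊢
  dsimp only
  rw [integral_prod_symm _ hI, integral_Ioc_eq_integral_Ioo]
  congr 1 with s
  rw [← integral_Ioc_eq_integral_Ioo, ← intervalIntegral.integral_of_le (by linarith)]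
  have hcs : Continuous fun y => pd1 (f t) (y, s) := hc.comp (by fun_prop)
  exact intervalIntegral.integral_eq_sub_of_hasDerivAt (f := fun y => f t (y, s))
    (fun y _ => hf.hasDerivAt_1 t (y, s)) (hcs.intervalIntegrable _ _)

/-- There is no lateral flux in the periodic direction. -/
lemma IsTest.Jint_pd2 {f : ℝ → ℝ × ℝ → ℝ} (hf : IsTest f) (a τ : ℝ) :
    Jint τ (Dom a) (fun t x => pd2 (f t) x) = 0 := by
  have hfin : IsFiniteMeasure (volume.restrict (Dom a)) :=
    ⟨by simpa using (volume_Dom_ne_top a).lt_top⟩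
  have key : ∀ t, ∫ x in Dom a, pd2 (f t) x = 0 := by
    intro t
    have hc : Continuous (pd2 (f t)) :=
      hf.continuous_pd2.comp (by fun_prop : Continuous fun x : ℝ × ℝ => (t, x))
    have hI := (BM.of_continuous_Dom (a := a) hc).integrable
    rw [Dom, Measure.volume_eq_prod, ← Measure.prod_restrict] at hI ⊢
    rw [integral_prod _ hI]
    refine integral_eq_zero_of_ae (.of_forall fun y => ?_)
    have hcs : Continuous fun s => pd2 (f t) (y, s) := hc.comp (by fun_prop)
    have h := intervalIntegral.integral_eq_sub_of_hasDerivAt (a := 0) (b := 1)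
      (f := fun s => f t (y, s)) (fun s _ => hf.hasDerivAt_2 t (y, s))
      (hcs.intervalIntegrable _ _)
    have hper : f t (y, 1) = f t (y, 0) := by simpa using hf.2 t y 0
    rw [intervalIntegral.integral_of_le zero_le_one, integral_Ioc_eq_integral_Ioo] at h
    exact h.trans (sub_eq_zero.2 hper)
  simp [Jint, key]

/-! ### The relative entropy inequality -/

/-- Expansion of the relative entropy in the quantities tested by the energy inequality, the
momentum equation and the equation of continuity; the Gibbs relation produces the last term. -/
lemma relEnt_eq {p : ℝ → ℝ} (hp : PressureOK p) {r : ℝ} (hr : 0 < r) (ρ : ℝ) (u V : ℝ × ℝ) :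
    relEnt p ρ u r V = (1 / 2 * ρ * (u.1 * u.1 + u.2 * u.2) + Hfun p ρ)
      - ρ * (u.1 * V.1 + u.2 * V.2)
      + ρ * (1 / 2 * (V.1 * V.1 + V.2 * V.2) - deriv (Hfun p) r) + p r := by
  rw [← deriv_Hfun_mul_sub hp hr]
  simp only [relEnt, dot, Prod.fst_sub, Prod.snd_sub]
  ring

/-- The linear bookkeeping of the proof: `e`, `m`, `c`, `π` are the energy, momentum, mass and
pressure contributions at times `τ` and `0`, and `bₑ`, `b₁`, `b₂`, `b_φ`, `b_π` the corresponding
boundary fluxes. -/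
lemma assemble {sτ s₀ x₁ x₂ t₁ t₂ eτ e₀ mτ m₀ cτ c₀ πτ π₀ bₑ b₁ b₂ b_φ b_π w₁ w₂ dt d₁ d₂ : ℝ}
    (h₁ : cτ - c₀ + b_φ = w₁) (h₂ : mτ - m₀ + b₁ + b₂ = w₂) (h₃ : eτ - e₀ + bₑ ≤ 0)
    (ht : dt = πτ - π₀) (hd₁ : d₁ = b_π) (hd₂ : d₂ = 0)
    (hτ : sτ = eτ - mτ + cτ + πτ) (h0 : s₀ = e₀ - m₀ + c₀ + π₀)
    (hx : x₁ + x₂ = b_φ - b₁ + bₑ + b_π + (-1) * b₂)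
    (hv : t₁ + t₂ = w₁ - w₂ + dt + d₁ + 1 * d₂) :
    sτ - s₀ + x₁ + x₂ ≤ t₁ + t₂ := by
  linarith

/-- Relative entropy inequality (Proposition 3.1): for any bounded admissible weak solution
`(ρ,u)` of the Riemann problem and any `C¹` test pair `(r,V)` with `r > 0` on `[0,T] × Ω̄`,
the relative entropy inequality holds for a.a. `τ ∈ (0,T)`. -/
theorem relative_entropy_inequality
    (T a : ℝ) (hT : 0 < T) (ha : 0 < a)
    (p : ℝ → ℝ) (hp : PressureOK p)
    (ρL ρR u1L u1R : ℝ) (hρL : 0 < ρL) (hρR : 0 < ρR)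
    (ρ : ℝ → ℝ × ℝ → ℝ) (u : ℝ → ℝ × ℝ → ℝ × ℝ)
    (hsol : IsAdmissibleWeakSol T a p ρL ρR u1L u1R ρ u)
    (r : ℝ → ℝ × ℝ → ℝ) (V : ℝ → ℝ × ℝ → ℝ × ℝ)
    (hr : IsTest r) (hV : IsTestV V)
    (hrpos : ∀ t ∈ Icc 0 T, ∀ x : ℝ × ℝ, x.1 ∈ Icc (-a) a → 0 < r t x) :
    ∀ᵐ τ ∂(volume.restrict (Ioo 0 T)),
      (∫ x in Dom a, relEnt p (ρ τ x) (u τ x) (r τ x) (V τ x)) -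
        (∫ x in Dom a,
          relEnt p (riem ρL ρR x) (riem u1L u1R x, 0) (r 0 x) (V 0 x)) +
        (∫ t in (0:ℝ)..τ, ∫ s in (0:ℝ)..1,
          (relEnt p ρR (u1R, 0) (r t (a, s)) (V t (a, s)) * u1R
            - relEnt p ρL (u1L, 0) (r t (-a, s)) (V t (-a, s)) * u1L)) +
        (∫ t in (0:ℝ)..τ, ∫ s in (0:ℝ)..1,
          ((p ρR - p (r t (a, s))) * (u1R - (V t (a, s)).1)
            - (p ρL - p (r t (-a, s))) * (u1L - (V t (-a, s)).1)))
      ≤ (∫ t in (0:ℝ)..τ, ∫ x in Dom a,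
          (ρ t x * (((deriv (fun τ' => V τ' x) t).1
              + (u t x).1 * pd1 (fun y => (V t y).1) x
              + (u t x).2 * pd2 (fun y => (V t y).1) x) * ((V t x).1 - (u t x).1)
            + ((deriv (fun τ' => V τ' x) t).2
              + (u t x).1 * pd1 (fun y => (V t y).2) x
              + (u t x).2 * pd2 (fun y => (V t y).2) x) * ((V t x).2 - (u t x).2))
          + (p (r t x) - p (ρ t x))
            * (pd1 (fun y => (V t y).1) x + pd2 (fun y => (V t y).2) x))) +
        (∫ t in (0:ℝ)..τ, ∫ x in Dom a,
          ((r t x - ρ t x) * pdt (fun t' x' => deriv (Hfun p) (r t' x')) t x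
            + (r t x * (V t x).1 - ρ t x * (u t x).1)
              * pd1 (fun y => deriv (Hfun p) (r t y)) x
            + (r t x * (V t x).2 - ρ t x * (u t x).2)
              * pd2 (fun y => deriv (Hfun p) (r t y)) x)) := by
  obtain ⟨v, w, rfl⟩ : ∃ v w : ℝ → ℝ × ℝ → ℝ, V = fun t x => (v t x, w t x) :=
    ⟨fun t x => (V t x).1, fun t x => (V t x).2, rfl⟩
  have hv : IsTest v := hV.fst
  have hw : IsTest w := hV.snd
  -- A positive lower bound for `r` on the closed space-time cylinder.
  obtain ⟨m, hm, hrm⟩ : ∃ m, 0 < m ∧ ∀ t ∈ Icc 0 T, ∀ x ∈ Icc (-a) a ×ˢ Icc (0:ℝ) 1, m ≤ r t x := by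
    obtain ⟨z, hz, hmin⟩ := ((isCompact_Icc (a := (0:ℝ)) (b := T)).prod
      ((isCompact_Icc (a := -a) (b := a)).prod
        (isCompact_Icc (a := (0:ℝ)) (b := 1)))).exists_isMinOn
      (nonempty_of_mem (x := (0, (0, 0))) (by simp [hT.le, ha.le])) hr.continuous.continuousOn
    exact ⟨r z.1 z.2, hrpos z.1 hz.1 z.2 hz.2.1, fun t ht x hx =>
      isMinOn_iff.1 hmin (t, x) (mk_mem_prod ht hx)⟩
  -- `q = H'(r)` and `π = p(r)` on the cylinder, extended to global `C¹` test functions: outside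
  -- the cylinder `r` may be nonpositive, where `H'` is not differentiable in general.
  obtain ⟨G, hG, hGm⟩ := exists_C1_extension (fun s hs => deriv_Hfun_hasDerivAt hp hs)
    (hp.continuousOn_deriv.div continuousOn_id fun _ hx => ne_of_gt hx) hm
  obtain ⟨P, hP, hPm⟩ := exists_C1_extension (fun s hs => hp.hasDerivAt hs)
    hp.continuousOn_deriv hm
  obtain ⟨q, hqdef⟩ : ∃ q : ℝ → ℝ × ℝ → ℝ, q = fun t x => G (r t x) := ⟨_, rfl⟩
  obtain ⟨π, hπdef⟩ : ∃ π : ℝ → ℝ × ℝ → ℝ, π = fun t x => P (r t x) := ⟨_, rfl⟩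
  have hq : IsTest q := hqdef ▸ hr.comp hG
  have hπ : IsTest π := hπdef ▸ hr.comp hP
  obtain ⟨φ, hφdef⟩ : ∃ φ : ℝ → ℝ × ℝ → ℝ,
      φ = fun t x => 1 / 2 * (v t x * v t x + w t x * w t x) - q t x := ⟨_, rfl⟩
  have hφ : IsTest φ := hφdef ▸ hv.kinetic hw hq
  obtain ⟨πv, hπvdef⟩ : ∃ f : ℝ → ℝ × ℝ → ℝ, f = fun t x => π t x * v t x := ⟨_, rfl⟩
  obtain ⟨πw, hπwdef⟩ : ∃ f : ℝ → ℝ × ℝ → ℝ, f = fun t x => π t x * w t x := ⟨_, rfl⟩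
  have hπv : IsTest πv := hπvdef ▸ hπ.mul hv
  have hπw : IsTest πw := hπwdef ▸ hπ.mul hw
  have hφt : ∀ t x, pdt φ t x = v t x * pdt v t x + w t x * pdt w t x - pdt q t x := fun t x => by
    rw [hφdef]
    exact ((hv.hasDerivAt_t t x).kinetic (hw.hasDerivAt_t t x) (hq.hasDerivAt_t t x)).deriv
  have hφ1 : ∀ t x, pd1 (φ t) x = v t x * pd1 (v t) x + w t x * pd1 (w t) x - pd1 (q t) x :=
    fun t x => by
    rw [hφdef]
    exact ((hv.hasDerivAt_1 t x).kinetic (hw.hasDerivAt_1 t x) (hq.hasDerivAt_1 t x)).deriv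
  have hφ2 : ∀ t x, pd2 (φ t) x = v t x * pd2 (v t) x + w t x * pd2 (w t) x - pd2 (q t) x :=
    fun t x => by
    rw [hφdef]
    exact ((hv.hasDerivAt_2 t x).kinetic (hw.hasDerivAt_2 t x) (hq.hasDerivAt_2 t x)).deriv
  have hπv1 : ∀ t x, pd1 (πv t) x = pd1 (π t) x * v t x + π t x * pd1 (v t) x := fun t x => by
    rw [hπvdef]
    exact ((hπ.hasDerivAt_1 t x).mul (hv.hasDerivAt_1 t x)).deriv
  have hπw2 : ∀ t x, pd2 (πw t) x = pd2 (π t) x * w t x + π t x * pd2 (w t) x := fun t x => by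
    rw [hπwdef]
    exact ((hπ.hasDerivAt_2 t x).mul (hw.hasDerivAt_2 t x)).deriv
  have hqr : ∀ t ∈ Icc 0 T, ∀ x ∈ Icc (-a) a ×ˢ Icc (0:ℝ) 1,
      deriv (Hfun p) (r t x) = q t x ∧ p (r t x) = π t x := fun t ht x hx => by
    rw [hqdef, hπdef]
    exact ⟨(hGm _ (hrm t ht x hx)).1.symm, (hPm _ (hrm t ht x hx)).1.symm⟩
  -- The chain rule; `∂p(r) = r ∂H'(r)` because `H''(r) = p'(r) / r`.
  have hchain : ∀ t ∈ Icc 0 T, ∀ x ∈ Icc (-a) a ×ˢ Icc (0:ℝ) 1,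
      (pdt (fun t' x' => deriv (Hfun p) (r t' x')) t x = pdt q t x ∧
        pd1 (fun y => deriv (Hfun p) (r t y)) x = pd1 (q t) x ∧
        pd2 (fun y => deriv (Hfun p) (r t y)) x = pd2 (q t) x) ∧
      (pdt π t x = r t x * pdt q t x ∧ pd1 (π t) x = r t x * pd1 (q t) x ∧
        pd2 (π t) x = r t x * pd2 (q t) x) := by
    intro t ht x hx
    have hge := hrm t ht x hx
    have h0 : 0 < r t x := hm.trans_le hge
    have dH := deriv_Hfun_hasDerivAt hp h0
    have dG := (hGm _ hge).2
    have dP := (hPm _ hge).2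
    have rt := hr.hasDerivAt_t t x
    have r1 := hr.hasDerivAt_1 t x
    have r2 := hr.hasDerivAt_2 t x
    have qt : pdt q t x = deriv p (r t x) / r t x * pdt r t x := by
      rw [hqdef]; exact (dG.comp t rt).deriv
    have q1 : pd1 (q t) x = deriv p (r t x) / r t x * pd1 (r t) x := by
      rw [hqdef]; exact (HasDerivAt.comp x.1 (h₂ := G) dG r1).deriv
    have q2 : pd2 (q t) x = deriv p (r t x) / r t x * pd2 (r t) x := by
      rw [hqdef]; exact (HasDerivAt.comp x.2 (h₂ := G) dG r2).deriv
    have pt : pdt π t x = deriv p (r t x) * pdt r t x := by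
      rw [hπdef]; exact (dP.comp t rt).deriv
    have p1 : pd1 (π t) x = deriv p (r t x) * pd1 (r t) x := by
      rw [hπdef]; exact (HasDerivAt.comp x.1 (h₂ := P) dP r1).deriv
    have p2 : pd2 (π t) x = deriv p (r t x) * pd2 (r t) x := by
      rw [hπdef]; exact (HasDerivAt.comp x.2 (h₂ := P) dP r2).deriv
    refine ⟨⟨?_, ?_, ?_⟩, ?_, ?_, ?_⟩
    · rw [qt]; exact (dH.comp t rt).deriv
    · rw [q1]; exact (HasDerivAt.comp x.1 (h₂ := deriv (Hfun p)) dH r1).deriv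
    · rw [q2]; exact (HasDerivAt.comp x.2 (h₂ := deriv (Hfun p)) dH r2).deriv
    · rw [pt, qt]; field_simp
    · rw [p1, q1]; field_simp
    · rw [p2, q2]; field_simp
  obtain ⟨C, hC⟩ := hsol.bdd
  have hρC : ∀ t x, |ρ t x| ≤ C := fun t x => (hC t x).1
  have hu1C : ∀ t x, ‖(u t x).1‖ ≤ C := fun t x => (norm_fst_le _).trans (hC t x).2
  have hu2C : ∀ t x, ‖(u t x).2‖ ≤ C := fun t x => (norm_snd_le _).trans (hC t x).2
  have hHc : ContinuousOn (Hfun p) (Ioi 0) := fun s hs =>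
    (Hfun_hasDerivAt hp hs).continuousAt.continuousWithinAt
  have hpb : ∃ M, ∀ s, 0 ≤ s → s ≤ C → |p s| ≤ M := by
    obtain ⟨M, hM⟩ := isCompact_Icc.exists_bound_of_continuousOn
      (hp.1.mono (Icc_subset_Ici_self : Icc 0 C ⊆ Ici 0))
    exact ⟨M, fun s h0 h1 => hM s ⟨h0, h1⟩⟩
  have hfin : IsFiniteMeasure (volume.restrict (Dom a)) :=
    ⟨by simpa using (volume_Dom_ne_top a).lt_top⟩
  have hslice : ∀ᵐ τ ∂(volume.restrict (Ioo 0 T)), ∀ᵐ x ∂(volume.restrict (Dom a)), 0 ≤ ρ τ x := by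
    have h := hsol.nonneg
    rw [Measure.volume_eq_prod, ← Measure.prod_restrict] at h
    exact Measure.ae_ae_of_ae_prod h
  filter_upwards [hsol.w1, hsol.w2, hsol.w3, hslice, ae_restrict_mem measurableSet_Ioo]
    with τ hw1 hw2 hw3 hτnn hτ
  have hτ0 : 0 ≤ τ := hτ.1.le
  have hτmem : τ ∈ Icc 0 T := ⟨hτ.1.le, hτ.2.le⟩
  have htmem : ∀ t ∈ Ioc 0 τ, t ∈ Icc 0 T := fun t ht => ⟨ht.1.le, ht.2.trans hτ.2.le⟩
  have hQnn : ∀ᵐ z ∂(volume.restrict (Ioc 0 τ ×ˢ Dom a)), 0 ≤ ρ z.1 z.2 :=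
    ae_restrict_of_ae_restrict_of_subset
      (prod_mono (fun _ ht => mem_Ioo.2 ⟨ht.1, ht.2.trans_lt hτ.2⟩) subset_rfl) hsol.nonneg
  -- Bounded fields on the cylinder.
  have bρ : BM (volume.restrict (Ioc 0 τ ×ˢ Dom a)) fun z => ρ z.1 z.2 :=
    memLp_top_of_bound hsol.meas_ρ.aestronglyMeasurable C (.of_forall fun z => hρC z.1 z.2)
  have bu1 : BM (volume.restrict (Ioc 0 τ ×ˢ Dom a)) fun z => (u z.1 z.2).1 :=
    memLp_top_of_bound hsol.meas_u.fst.aestronglyMeasurable C (.of_forall fun z => hu1C z.1 z.2)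
  have bu2 : BM (volume.restrict (Ioc 0 τ ×ˢ Dom a)) fun z => (u z.1 z.2).2 :=
    memLp_top_of_bound hsol.meas_u.snd.aestronglyMeasurable C (.of_forall fun z => hu2C z.1 z.2)
  have bp : BM (volume.restrict (Ioc 0 τ ×ˢ Dom a)) fun z => p (ρ z.1 z.2) :=
    BM.comp_density hsol.meas_ρ (fun z => hρC z.1 z.2) hQnn (hp.1.mono Ioi_subset_Ici_self) hpb
  have bt : ∀ f, IsTest f → BM (volume.restrict (Ioc 0 τ ×ˢ Dom a)) fun z => f z.1 z.2 :=
    fun f hf => .of_continuous_cyl hf.continuous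
  have btt : ∀ f, IsTest f → BM (volume.restrict (Ioc 0 τ ×ˢ Dom a)) fun z => pdt f z.1 z.2 :=
    fun f hf => .of_continuous_cyl hf.continuous_pdt
  have bt1 : ∀ f, IsTest f → BM (volume.restrict (Ioc 0 τ ×ˢ Dom a)) fun z => pd1 (f z.1) z.2 :=
    fun f hf => .of_continuous_cyl hf.continuous_pd1
  have bt2 : ∀ f, IsTest f → BM (volume.restrict (Ioc 0 τ ×ˢ Dom a)) fun z => pd2 (f z.1) z.2 :=
    fun f hf => .of_continuous_cyl hf.continuous_pd2
  have bv := bt v hv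
  have bw := bt w hw
  have bπ := bt π hπ
  have bvt := btt v hv
  have bwt := btt w hw
  have bv1 := bt1 v hv
  have bv2 := bt2 v hv
  have bw1 := bt1 w hw
  have bw2 := bt2 w hw
  have bφt := btt φ hφ
  have bφ1 := bt1 φ hφ
  have bφ2 := bt2 φ hφ
  -- Bounded fields on the boundary.
  have ct : ∀ f, IsTest f → ∀ b : ℝ,
      BM (volume.restrict (Ioc 0 τ ×ˢ Ioc (0:ℝ) 1)) fun z => f z.1 (b, z.2) :=
    fun f hf b => .of_continuous_bdry
      (hf.continuous.comp (by fun_prop : Continuous fun z : ℝ × ℝ => (z.1, (b, z.2))))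
  have cva := ct v hv a
  have cva' := ct v hv (-a)
  have cwa := ct w hw a
  have cwa' := ct w hw (-a)
  have cφa := ct φ hφ a
  have cφa' := ct φ hφ (-a)
  have cπa := ct π hπ a
  have cπa' := ct π hπ (-a)
  have cπva := ct πv hπv a
  have cπva' := ct πv hπv (-a)
  -- Bounded fields on time slices.
  have sρ : BM (volume.restrict (Dom a)) fun x => ρ τ x :=
    memLp_top_of_bound (hsol.meas_ρ.comp measurable_prodMk_left).aestronglyMeasurable C
      (.of_forall fun x => hρC τ x)
  have su1 : BM (volume.restrict (Dom a)) fun x => (u τ x).1 :=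
    memLp_top_of_bound (hsol.meas_u.comp measurable_prodMk_left).fst.aestronglyMeasurable C
      (.of_forall fun x => hu1C τ x)
  have su2 : BM (volume.restrict (Dom a)) fun x => (u τ x).2 :=
    memLp_top_of_bound (hsol.meas_u.comp measurable_prodMk_left).snd.aestronglyMeasurable C
      (.of_forall fun x => hu2C τ x)
  have sH : BM (volume.restrict (Dom a)) fun x => Hfun p (ρ τ x) :=
    BM.comp_density (hsol.meas_ρ.comp measurable_prodMk_left) (fun x => hρC τ x) hτnn hHc
      (Hfun_bounded hp C)
  have st : ∀ f, IsTest f → ∀ t, BM (volume.restrict (Dom a)) fun x => f t x :=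
    fun f hf t => .of_continuous_Dom (hf.continuous.comp (by fun_prop : Continuous (t, ·)))
  have sv := st v hv τ
  have sw := st w hw τ
  have sφ := st φ hφ τ
  have sv0 := st v hv 0
  have sφ0 := st φ hφ 0
  have sρ0 : BM (volume.restrict (Dom a)) fun x => riem ρL ρR x := .riem _ measurable_id _ _
  have su0 : BM (volume.restrict (Dom a)) fun x => riem u1L u1R x := .riem _ measurable_id _ _
  have sH0 : BM (volume.restrict (Dom a)) fun x => Hfun p (riem ρL ρR x) := by
    have h : (fun x => Hfun p (riem ρL ρR x)) = fun x => riem (Hfun p ρL) (Hfun p ρR) x := by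
      funext x; simp only [riem]; split_ifs <;> rfl
    rw [h]; exact .riem _ measurable_id _ _
  have se : BM (volume.restrict (Dom a)) fun x =>
      1 / 2 * ρ τ x * ((u τ x).1 * (u τ x).1 + (u τ x).2 * (u τ x).2) + Hfun p (ρ τ x) := by
    repeat' first | assumption | exact BM.const _ | apply BM.add | apply BM.mul
  have sm : BM (volume.restrict (Dom a)) fun x =>
      ρ τ x * ((u τ x).1 * v τ x + (u τ x).2 * w τ x) := by
    repeat' first | assumption | exact BM.const _ | apply BM.add | apply BM.mul
  have sc : BM (volume.restrict (Dom a)) fun x => ρ τ x * φ τ x := sρ.mul sφ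
  have se0 : BM (volume.restrict (Dom a)) fun x =>
      1 / 2 * riem ρL ρR x * (riem u1L u1R x * riem u1L u1R x) + Hfun p (riem ρL ρR x) := by
    repeat' first | assumption | exact BM.const _ | apply BM.add | apply BM.mul
  have sm0 : BM (volume.restrict (Dom a)) fun x =>
      riem ρL ρR x * (riem u1L u1R x * v 0 x) := sρ0.mul (su0.mul sv0)
  have sc0 : BM (volume.restrict (Dom a)) fun x => riem ρL ρR x * φ 0 x := sρ0.mul sφ0
  -- The weak formulation tested with `φ = |V|² / 2 - H'(r)` and with `V`.
  replace hw1 := hw1 φ hφ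
  replace hw2 := hw2 _ hV
  rw [integral_sub sc.integrable sc0.integrable] at hw1
  simp only [hV.deriv_eq, dot, zero_mul, add_zero] at hw2
  rw [integral_sub sm.integrable sm0.integrable] at hw2
  simp only [dot, sq] at hw3
  have hI : ∀ f : ℝ → ℝ → ℝ,
      ∫ t in (0:ℝ)..τ, ∫ s in (0:ℝ)..1, f t s = Jint τ (Ioc (0:ℝ) 1) f := fun f => by
    simp only [Jint, intervalIntegral.integral_of_le zero_le_one]
  have hJ : ∀ f : ℝ → ℝ × ℝ → ℝ,
      ∫ t in (0:ℝ)..τ, ∫ x in Dom a, f t x = Jint τ (Dom a) f := fun _ => rfl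
  rw [hI, hJ] at hw1
  rw [hI, hI, hJ] at hw2
  rw [hI] at hw3
  simp only [hV.deriv_eq]
  rw [hI, hI, hJ, hJ]
  have hDin : ∀ x ∈ Dom a, x ∈ Icc (-a) a ×ˢ Icc (0:ℝ) 1 := fun x hx => Dom_subset a hx
  have hain : ∀ s ∈ Ioc (0:ℝ) 1, ((a, s) : ℝ × ℝ) ∈ Icc (-a) a ×ˢ Icc (0:ℝ) 1 ∧
      ((-a, s) : ℝ × ℝ) ∈ Icc (-a) a ×ˢ Icc (0:ℝ) 1 := fun s hs =>
    ⟨⟨⟨by simp only; linarith, le_rfl⟩, hs.1.le, hs.2⟩,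
      ⟨⟨le_rfl, by simp only; linarith⟩, hs.1.le, hs.2⟩⟩
  refine assemble hw1 hw2 hw3 (hπ.Jint_pdt hτ0 a) (hπv.Jint_pd1 ha τ) (hπw.Jint_pd2 a τ)
    ?_ ?_ ?_ ?_
  · refine setIntegral_comb (measurableSet_Dom a) se sm sc (st π hπ τ) fun x hx => ?_
    have h := hqr τ hτmem x (hDin x hx)
    rw [relEnt_eq hp (hm.trans_le (hrm τ hτmem x (hDin x hx))), h.1, h.2, hφdef]
  · have h0mem : (0:ℝ) ∈ Icc 0 T := ⟨le_rfl, hT.le⟩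
    refine setIntegral_comb (measurableSet_Dom a) se0 sm0 sc0 (st π hπ 0) fun x hx => ?_
    have h := hqr 0 h0mem x (hDin x hx)
    rw [relEnt_eq hp (hm.trans_le (hrm 0 h0mem x (hDin x hx))), h.1, h.2, hφdef]
    simp only
    ring
  · refine Jint_comb hτ0 measurableSet_Ioc (by simp) (-1) (T₁' := fun t s =>
      ((1 / 2 * ρR * u1R ^ 2 + Hfun p ρR) - ρR * (u1R * v t (a, s)) + ρR * φ t (a, s)
          + π t (a, s)) * u1R
        - ((1 / 2 * ρL * u1L ^ 2 + Hfun p ρL) - ρL * (u1L * v t (-a, s)) + ρL * φ t (-a, s)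
          + π t (-a, s)) * u1L) ?_ ?_ ?_ ?_ ?_ ?_ ?_ ?_
    any_goals
      repeat' first
        | assumption
        | exact BM.const _
        | apply BM.sub
        | apply BM.add
        | apply BM.mul
    · intro t ht s hs
      obtain ⟨ha1, ha2⟩ := hain s hs
      have h1 := hqr t (htmem t ht) _ ha1
      have h2 := hqr t (htmem t ht) _ ha2
      rw [relEnt_eq hp (hm.trans_le (hrm t (htmem t ht) _ ha1)),
        relEnt_eq hp (hm.trans_le (hrm t (htmem t ht) _ ha2)), h1.1, h1.2, h2.1, h2.2, hφdef]
      simp only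
      ring
    · intro t ht s hs
      obtain ⟨ha1, ha2⟩ := hain s hs
      have h1 := hqr t (htmem t ht) _ ha1
      have h2 := hqr t (htmem t ht) _ ha2
      rw [relEnt_eq hp (hm.trans_le (hrm t (htmem t ht) _ ha1)),
        relEnt_eq hp (hm.trans_le (hrm t (htmem t ht) _ ha2)), h1.1, h1.2, h2.1, h2.2, hφdef,
        hπvdef]
      simp only
      ring
  · refine Jint_comb hτ0 (measurableSet_Dom a) (volume_Dom_ne_top a) 1 (T₁' := fun t x =>
      ρ t x * ((pdt v t x + (u t x).1 * pd1 (v t) x + (u t x).2 * pd2 (v t) x)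
            * (v t x - (u t x).1)
          + (pdt w t x + (u t x).1 * pd1 (w t) x + (u t x).2 * pd2 (w t) x)
            * (w t x - (u t x).2))
        + (π t x - p (ρ t x)) * (pd1 (v t) x + pd2 (w t) x))
      ((bρ.mul ((((bvt.add (bu1.mul bv1)).add (bu2.mul bv2)).mul (bv.sub bu1)).add
        (((bwt.add (bu1.mul bw1)).add (bu2.mul bw2)).mul (bw.sub bu2)))).add
          ((bπ.sub bp).mul (bv1.add bw2)))
      ((bρ.mul bφt).add (bρ.mul ((bu1.mul bφ1).add (bu2.mul bφ2))))
      (((bρ.mul ((bu1.mul bvt).add (bu2.mul bwt))).add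
        (bρ.mul (((((bu1.mul bu1).mul bv1).add ((bu2.mul bu1).mul bv2)).add
          ((bu1.mul bu2).mul bw1)).add ((bu2.mul bu2).mul bw2)))).add (bp.mul (bv1.add bw2)))
      (btt π hπ) (bt1 πv hπv) (bt2 πw hπw) ?_ ?_
    · intro t ht x hx
      rw [(hqr t (htmem t ht) x (hDin x hx)).2]
    · intro t ht x hx
      obtain ⟨⟨ht', h1', h2'⟩, ht'', h1'', h2''⟩ := hchain t (htmem t ht) x (hDin x hx)
      rw [ht', h1', h2', hφt, hφ1, hφ2, hπv1, hπw2, ht'', h1'', h2'',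
        (hqr t (htmem t ht) x (hDin x hx)).2]
      ring

end
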